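/- Let X be a separable complex operator space and Y a complex operator space. If there is a sequence of maps (f^n : X → Y)_{n∈ℕ} such that for every n the n-th amplification of f^n is an isometry (X almost completely isometrically embeds into Y), then there is a sequence (g^n : X → Y)_{n∈ℕ} of ℝ-linear maps such that for every n the n-th amplification of g^n is an isometry (X almost completely ℝ-linearly isometrically embeds into Y). -/

import Mathlib

/-!
Fix `n ≥ 1` and let `f` be an `n`-isometry; it is Lipschitz. Let `e_k` be a summable sequence of
positive multiples of a dense sequence of `X`, and let `S = ∑ t_k e_k` be a random vector, the
`t_k ∈ [0, 1]` being independent and uniform. Its range is compact. The average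
`F x = 𝔼 f (x + S)` is smoother than `f`: integrating the coordinate `t_k` first shows that `F` has a derivative
at the origin in the direction `e_k` (`avgDeriv_of_update`), with error bounds good enough for
the derivatives to add up, so that the pairs (direction, derivative) form a linear subspace of
`X × Y` (`avgGraph`). It is the graph of a bounded linear map on a dense subspace, and the
`ℝ`-linear map sought is the continuous extension of that map.

It remains to see that this map is still an `n`-isometry. The norm of an average is at most the
average of the norms; the point is that nothing is lost (`norm_integral_difference`). For a
matrix `x` the increments `f_n (S + x) - f_n S`, where `S` is added to each entry, all have norm
`‖x‖`, and they turn out to be almost normed by one common functional. In a finite-dimensional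
space `V` containing `x` and approximating the range of `S`, choose a point `z` near `x` at which
the norm of `V` is differentiable (Rademacher), and let `φ` norm `f_n (k z) - f_n (-k z)` for a
large `k`; as in the theorem of Figiel on nonlinear isometries, `φ ∘ f_n` increases by almost
`‖x‖` along every step `y ↦ y + x` in a bounded part of `V` (`exists_functional`).
-/

noncomputable section

open Filter Topology

namespace OSpaper

/-- The amplification of a square array of bounded operators on a Hilbert space `H` to a
bounded operator on the ℓ²-direct sum of copies of `H`. -/
def amp {𝕜 : Type*} [RCLike 𝕜] {ι : Type*} [Fintype ι] {H : Type*}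
    [NormedAddCommGroup H] [InnerProductSpace 𝕜 H] (x : ι → ι → H →L[𝕜] H) :
    (PiLp 2 fun _ : ι => H) →L[𝕜] PiLp 2 fun _ : ι => H :=
  ((PiLp.continuousLinearEquiv 2 𝕜 fun _ : ι => H).symm.toContinuousLinearMap) ∘L
    (ContinuousLinearMap.pi fun i => ∑ j, (x i j).comp (ContinuousLinearMap.proj j)) ∘L
    ((PiLp.continuousLinearEquiv 2 𝕜 fun _ : ι => H).toContinuousLinearMap)

/-- The norm of an element of `M_ι(B(H))`, i.e. the operator norm of its amplification. -/
def matNorm {𝕜 : Type*} [RCLike 𝕜] {ι : Type*} [Fintype ι] {H : Type*}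
    [NormedAddCommGroup H] [InnerProductSpace 𝕜 H] (x : ι → ι → H →L[𝕜] H) : ℝ :=
  ‖amp x‖

/-- The norm of a scalar matrix `M_ι(𝕜)`, viewed as an operator on `ℓ²(ι)`. -/
def cNorm {𝕜 : Type*} [RCLike 𝕜] {ι : Type*} [Fintype ι] (a : ι → ι → 𝕜) : ℝ :=
  matNorm fun i j => a i j • (1 : 𝕜 →L[𝕜] 𝕜)

open MeasureTheory

/-! ### Almost linear functionals on finite-dimensional pieces -/

lemma exists_norm_differentiableAt {E : Type*} [NormedAddCommGroup E] [NormedSpace ℝ E]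
    [FiniteDimensional ℝ E] (x : E) {ε : ℝ} (hε : 0 < ε) :
    ∃ z : E, DifferentiableAt ℝ (fun y : E => ‖y‖) z ∧ ‖x - z‖ < ε := by
  borelize E
  have hd : Dense {z : E | DifferentiableAt ℝ (fun y : E => ‖y‖) z} :=
    Measure.dense_of_ae (μ := (Measure.addHaar : Measure E))
      ((lipschitzWith_one_norm (E := E)).ae_differentiableAt)
  obtain ⟨z, hz, hxz⟩ := hd.exists_dist_lt x hε
  exact ⟨z, hz, by rwa [← dist_eq_norm]⟩

/-- At a point `z` of differentiability of the norm, the norm is almost affine near `k • z` for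
large `k`: by homogeneity, a ball of fixed radius around `k • z` is a rescaled small ball
around `z`. -/
lemma exists_norm_le_of_differentiableAt {E : Type*} [NormedAddCommGroup E] [NormedSpace ℝ E]
    {z : E} (hz : DifferentiableAt ℝ (fun y : E => ‖y‖) z) (ρ : ℝ) {ε : ℝ} (hε : 0 < ε) :
    ∃ k : ℝ, 0 < k ∧ ∀ v : E, ‖v‖ ≤ ρ →
      ‖k • z + v‖ ≤ k * ‖z‖ + fderiv ℝ (fun y : E => ‖y‖) z v + ε := by
  have hρ : 0 < |ρ| + 1 := by positivity
  have h1 := hz.hasFDerivAt.isLittleO.def (c := ε / (|ρ| + 1)) (by positivity)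
  obtain ⟨δ, hδ, h2⟩ := Metric.eventually_nhds_iff.1 h1
  set k : ℝ := (|ρ| + 1) / δ with hk
  have hk0 : 0 < k := by positivity
  refine ⟨k, hk0, fun v hv => ?_⟩
  have hv' : ‖v‖ < |ρ| + 1 := by linarith [le_abs_self ρ]
  have h3 := @h2 (z + k⁻¹ • v) (by
    rw [dist_eq_norm, add_sub_cancel_left, norm_smul, Real.norm_of_nonneg (by positivity), hk,
      inv_div, div_mul_eq_mul_div, div_lt_iff₀ hρ]
    gcongr)
  rw [add_sub_cancel_left, norm_smul, Real.norm_of_nonneg (r := k⁻¹) (by positivity), map_smul,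
    Real.norm_eq_abs, smul_eq_mul] at h3
  have h4 := (abs_le.1 h3).2
  have h5 : ‖k • z + v‖ = k * ‖z + k⁻¹ • v‖ := by
    rw [← Real.norm_of_nonneg hk0.le, ← norm_smul, Real.norm_of_nonneg hk0.le, smul_add,
      smul_inv_smul₀ hk0.ne']
  have h6 : k * (‖z + k⁻¹ • v‖ - ‖z‖ - k⁻¹ * fderiv ℝ (fun y : E => ‖y‖) z v)
      ≤ k * (ε / (|ρ| + 1) * (k⁻¹ * ‖v‖)) := by gcongr
  have h7 : k * (ε / (|ρ| + 1) * (k⁻¹ * ‖v‖)) = ε * (‖v‖ / (|ρ| + 1)) := by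
    field_simp
  have h8 : ε * (‖v‖ / (|ρ| + 1)) ≤ ε * 1 := by
    gcongr
    rw [div_le_one hρ]; exact hv'.le
  have h9 : k * (k⁻¹ * fderiv ℝ (fun y : E => ‖y‖) z v) = fderiv ℝ (fun y : E => ‖y‖) z v := by
    field_simp
  rw [h5]
  linarith [mul_sub k (‖z + k⁻¹ • v‖ - ‖z‖) (k⁻¹ * fderiv ℝ (fun y : E => ‖y‖) z v),
    mul_sub k ‖z + k⁻¹ • v‖ ‖z‖]

/-- A local form of the theorem of Figiel. If `F` is isometric for the seminorm `‖A ·‖` and `V` is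
finite-dimensional, then for every `x ∈ V` some functional of norm at most one sees an increment
of almost `‖A x‖` along *every* step `y ↦ y + x` with `y` in a bounded part of `V`.

The functional norms `F (k • z) - F (-(k • z))`, where `A z` is close to `A x` and is a point
of differentiability of the norm of `A V`. Along the path
`-(k • z), y, y + x, k • z` the two outer steps have length at most
`k * ‖A z‖ + D (A y)` and `k * ‖A z‖ - D (A y + A x)` up to a small error, which leaves an increment
of about `D (A x) ≈ ‖A x‖` for the middle one, where `D` is the derivative of the norm at `A z`. -/
lemma exists_functional {Z W₁ W₂ : Type*} [AddCommGroup Z] [Module ℝ Z]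
    [NormedAddCommGroup W₁] [NormedSpace ℝ W₁] [NormedAddCommGroup W₂] [NormedSpace ℝ W₂]
    (A : Z →ₗ[ℝ] W₁) (F : Z → W₂) (hF : ∀ a b, ‖F a - F b‖ = ‖A (a - b)‖)
    (V : Submodule ℝ Z) [FiniteDimensional ℝ V] {x : Z} (hx : x ∈ V) (R : ℝ) {η : ℝ}
    (hη : 0 < η) :
    ∃ φ : W₂ →L[ℝ] ℝ, ‖φ‖ ≤ 1 ∧ ∀ y ∈ V, ‖A y‖ ≤ R → ‖A x‖ - η ≤ φ (F (y + x) - F y) := by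
  obtain ⟨z', hz', hxz⟩ := exists_norm_differentiableAt
    (⟨A x, Submodule.mem_map_of_mem hx⟩ : V.map A) (ε := η / 4) (by positivity)
  obtain ⟨z, hzV, hAz⟩ := Submodule.mem_map.1 z'.2
  obtain ⟨k, hk, hkz⟩ := exists_norm_le_of_differentiableAt hz' (R + ‖A x‖) (ε := η / 4)
    (by positivity)
  set D := fderiv ℝ (fun y : V.map A => ‖y‖) z'
  have hDz : D z' = ‖z'‖ := hz'.fderiv_norm_self
  have hD1 : ∀ v, |D v| ≤ ‖v‖ := fun v => by
    have := D.le_of_opNorm_le (norm_fderiv_le_of_lipschitz ℝ (C := 1) lipschitzWith_one_norm) v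
    simpa using this
  -- the functional norms the long segment of the line through `z`
  obtain ⟨φ, hφ, hφk⟩ := exists_dual_vector'' ℝ (F (k • z) - F (-(k • z)))
  have hle : ∀ w, φ w ≤ ‖w‖ := fun w =>
    (le_abs_self _).trans (by simpa using φ.le_of_opNorm_le hφ w)
  refine ⟨φ, hφ, fun y hy hyR => ?_⟩
  have e1 : ‖F (k • z) - F (-(k • z))‖ = 2 * (k * ‖z'‖) := by
    rw [hF, sub_neg_eq_add, ← two_smul ℝ, map_smul, map_smul, norm_smul, norm_smul, hAz,
      Real.norm_of_nonneg hk.le]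
    simp
  let y' : V.map A := ⟨A y, Submodule.mem_map_of_mem hy⟩
  let x' : V.map A := ⟨A x, Submodule.mem_map_of_mem hx⟩
  have e2 : ‖F (k • z) - F (y + x)‖ = ‖k • z' + (-(y' + x'))‖ := by
    rw [hF, ← Submodule.norm_coe]
    congr 1
    simp [y', x', hAz, sub_eq_add_neg]
  have e3 : ‖F y - F (-(k • z))‖ = ‖k • z' + y'‖ := by
    rw [hF, ← Submodule.norm_coe]
    congr 1
    simp [y', hAz, add_comm]
  have ny : ‖y'‖ ≤ R := hyR
  have nx : ‖x'‖ = ‖A x‖ := rfl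
  have b2 := hkz (-(y' + x')) (by rw [norm_neg]; linarith [norm_add_le y' x'])
  have b3 := hkz y' (by linarith [norm_nonneg (A x)])
  have c2 := hle (F (k • z) - F (y + x))
  have c3 := hle (F y - F (-(k • z)))
  simp only [map_neg, map_add, map_sub] at b2 b3 c2 c3 hφk ⊢
  have d1 : D x' - D z' ≥ -(η/4) := by
    rw [← map_sub]
    have := (abs_le.1 (hD1 (x' - z'))).1
    linarith
  have d2 : ‖x'‖ - ‖z'‖ ≤ η / 4 := (norm_sub_norm_le _ _).trans hxz.le
  simp only [RCLike.ofReal_real_eq_id, id] at hφk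
  linarith

/-! ### Averaging over one coordinate of the Hilbert cube -/

/-- The average over `[0, 1]` of the increments of a Lipschitz function is differentiable in the
shift `h` at `0`, with derivative `u 1 - u 0` and a quadratic error. -/
lemma norm_integral_shift_sub_le {Y : Type*} [NormedAddCommGroup Y] [NormedSpace ℝ Y]
    [CompleteSpace Y] {u : ℝ → Y} {L : ℝ} (hu : ∀ a b, ‖u a - u b‖ ≤ L * |a - b|)
    (hc : Continuous u) (h : ℝ) :
    ‖(∫ r in (0:ℝ)..1, (u (r + h) - u r)) - h • (u 1 - u 0)‖ ≤ 2 * L * |h| * |h| := by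
  have hi : ∀ a b : ℝ, IntervalIntegrable u volume a b := fun a b => hc.intervalIntegrable a b
  have hi' : ∀ a b : ℝ, IntervalIntegrable (fun r => u (r + 1)) volume a b :=
    fun a b => (hc.comp (continuous_add_const 1)).intervalIntegrable a b
  have e1 : (∫ r in (0:ℝ)..1, (u (r + h) - u r)) = ∫ r in (0:ℝ)..h, (u (r + 1) - u r) := by
    have hi'' : IntervalIntegrable (fun r => u (r + h)) volume 0 1 :=
      (hc.comp (continuous_add_const h)).intervalIntegrable 0 1
    rw [intervalIntegral.integral_sub hi'' (hi 0 1), intervalIntegral.integral_sub (hi' 0 h) (hi 0 h),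
      intervalIntegral.integral_comp_add_right, intervalIntegral.integral_comp_add_right,
      sub_eq_sub_iff_add_eq_add, zero_add, zero_add, add_comm,
      intervalIntegral.integral_add_adjacent_intervals (hi _ _) (hi _ _), add_comm h 1,
      add_comm (∫ x in (1:ℝ)..(1 + h), u x),
      intervalIntegral.integral_add_adjacent_intervals (hi _ _) (hi _ _)]
  have e2 : h • (u 1 - u 0) = ∫ r in (0:ℝ)..h, (u 1 - u 0) := by
    rw [intervalIntegral.integral_const, sub_zero]
  rw [e1, e2, ← intervalIntegral.integral_sub ((hi' 0 h).sub (hi 0 h)) (by simp)]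
  have hL : 0 ≤ L := by simpa using (norm_nonneg _).trans (hu 1 0)
  refine (intervalIntegral.norm_integral_le_of_norm_le_const (C := 2 * L * |h|) fun r hr => ?_).trans
    (by simp)
  have hrh : |r| ≤ |h| := by
    rcases Set.mem_uIoc.1 hr with hr | hr
    · rw [abs_of_pos hr.1, abs_of_pos (hr.1.trans_le hr.2)]; exact hr.2
    · rw [abs_of_nonpos hr.2, abs_of_neg (hr.1.trans_le hr.2)]; linarith [hr.1]
  have h1 := hu (r + 1) 1
  have h2 := hu r 0
  rw [add_sub_cancel_right] at h1
  rw [sub_zero] at h2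
  calc ‖u (r + 1) - u r - (u 1 - u 0)‖ = ‖(u (r + 1) - u 1) - (u r - u 0)‖ := by congr 1; abel
    _ ≤ L * |r| + L * |r| := (norm_sub_le _ _).trans (add_le_add h1 h2)
    _ ≤ L * |h| + L * |h| := by gcongr
    _ = _ := by ring

/-- Resampling one coordinate of a uniformly random point of the Hilbert cube does not change its
distribution. -/
lemma measurePreserving_update (k : ℕ) :
    MeasurePreserving (fun p : (ℕ → unitInterval) × unitInterval => Function.update p.1 k p.2)
      ((Measure.infinitePi fun _ : ℕ => (volume : Measure unitInterval)).prod volume)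
      (Measure.infinitePi fun _ : ℕ => (volume : Measure unitInterval)) := by
  have hm : Measurable
      (fun p : (ℕ → unitInterval) × unitInterval => Function.update p.1 k p.2) := by
    refine measurable_pi_lambda _ fun j => ?_
    by_cases hj : j = k
    · subst hj; simpa using measurable_snd
    · simp only [Function.update_of_ne hj]
      fun_prop
  refine ⟨hm, Measure.eq_infinitePi _ fun s t ht => ?_⟩
  rw [Measure.map_apply hm (.pi s.countable_toSet fun _ _ => ht _)]
  by_cases hk : k ∈ s
  · have : (fun p : (ℕ → unitInterval) × unitInterval => Function.update p.1 k p.2) ⁻¹'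
        (Set.pi s t) = (Set.pi (s.erase k : Finset ℕ) t) ×ˢ (t k) := by
      ext p
      simp only [Set.mem_preimage, Set.mem_pi, Set.mem_prod, Finset.mem_coe, Finset.mem_erase]
      constructor
      · intro h
        exact ⟨fun j hj => by simpa [hj.1] using h j hj.2, by simpa using h k hk⟩
      · rintro ⟨h1, h2⟩ j hj
        by_cases hjk : j = k
        · subst hjk; simpa using h2
        · simpa [hjk] using h1 j ⟨hjk, hj⟩
    rw [this, Measure.prod_prod, Measure.infinitePi_pi _ (fun i _ => ht i),
      Finset.prod_erase_mul _ _ hk]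
  · have : (fun p : (ℕ → unitInterval) × unitInterval => Function.update p.1 k p.2) ⁻¹'
        (Set.pi s t) = (Set.pi s t) ×ˢ Set.univ := by
      ext p
      simp only [Set.mem_preimage, Set.mem_pi, Set.mem_prod, Finset.mem_coe, Set.mem_univ, and_true]
      refine forall₂_congr fun j hj => ?_
      have hjk : j ≠ k := fun h => hk (h ▸ hj)
      simp [hjk]
    rw [this, Measure.prod_prod, Measure.infinitePi_pi _ (fun i _ => ht i)]
    simp

/-! ### Derivatives of averages -/

section Average

variable {X Y Ω : Type*} [NormedAddCommGroup X] [NormedSpace ℝ X]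
  [NormedAddCommGroup Y] [NormedSpace ℝ Y]
  [MeasurableSpace Ω]

/-- `w` is the derivative in the direction `v` of the average `x ↦ ∫ t, f (x + S t) ∂μ`, at the
origin and with a locally uniform rate. The error `C * |h| * (|h| + ‖x‖)` controls difference
quotients based at all `x`, which is what makes the relation additive in `(v, w)`. -/
def AvgDeriv (f : X → Y) (S : Ω → X) (μ : Measure Ω) (v : X) (w : Y) : Prop :=
  ∃ C : ℝ, 0 ≤ C ∧ ∀ (x : X) (h : ℝ),
    ‖(∫ t, (f (x + S t + h • v) - f (x + S t)) ∂μ) - h • w‖ ≤ C * |h| * (|h| + ‖x‖)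

lemma AvgDeriv.norm_le {f : X → Y} {S : Ω → X} {μ : Measure Ω} [IsProbabilityMeasure μ]
    {K : ℝ} (hK : ∀ a b, ‖f a - f b‖ ≤ K * ‖a - b‖) {v : X} {w : Y} (h : AvgDeriv f S μ v w) :
    ‖w‖ ≤ K * ‖v‖ := by
  obtain ⟨C, hC, h⟩ := h
  refine le_of_forall_pos_le_add fun ε hε => ?_
  set r : ℝ := ε / (C + 1)
  have hr : 0 < r := by positivity
  have h1 := h 0 r
  rw [abs_of_pos hr, norm_zero, add_zero] at h1
  have h2 : ‖∫ t, (f (0 + S t + r • v) - f (0 + S t)) ∂μ‖ ≤ K * (r * ‖v‖) := by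
    refine (norm_integral_le_of_norm_le_const (C := K * (r * ‖v‖)) (ae_of_all _ fun t => ?_)).trans
      (by simp)
    refine (hK _ _).trans (by simp [norm_smul, abs_of_pos hr])
  have h3 : ‖r • w‖ ≤ C * r * r + K * (r * ‖v‖) := by
    have := norm_le_norm_add_norm_sub' (r • w) (∫ t, (f (0 + S t + r • v) - f (0 + S t)) ∂μ)
    rw [norm_sub_rev] at this
    linarith
  rw [norm_smul, Real.norm_of_nonneg hr.le] at h3
  have h4 : ‖w‖ ≤ C * r + K * ‖v‖ := by
    refine le_of_mul_le_mul_left ?_ hr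
    linarith
  have h5 : C * r ≤ ε := by
    rw [show C * r = ε * (C / (C + 1)) by simp only [r]; ring]
    refine mul_le_of_le_one_right hε.le ?_
    rw [div_le_one (by positivity)]; linarith
  linarith

variable [TopologicalSpace Ω] [CompactSpace Ω] [OpensMeasurableSpace Ω]

lemma integrable_of_compact {Ω Y : Type*} [NormedAddCommGroup Y]
    [TopologicalSpace Ω] [CompactSpace Ω] [MeasurableSpace Ω] [OpensMeasurableSpace Ω]
    {μ : Measure Ω} [IsFiniteMeasure μ] {Φ : Ω → Y} (hΦ : Continuous Φ) :
    Integrable Φ μ :=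
  hΦ.integrable_of_hasCompactSupport (HasCompactSupport.of_compactSpace Φ)

/-- The graph of the directional derivative of the average of `f`: the pairs `(v, w)` with
`AvgDeriv f S μ v w` form a linear subspace. -/
def avgGraph (f : X → Y) (hf : Continuous f) (S : Ω → X) (hS : Continuous S)
    (μ : Measure Ω) [IsFiniteMeasure μ] : Submodule ℝ (X × Y) where
  carrier := {p | AvgDeriv f S μ p.1 p.2}
  zero_mem' := ⟨0, le_rfl, fun x h => by simp⟩
  add_mem' := by
    rintro ⟨v, w⟩ ⟨v', w'⟩ ⟨C, hC, h⟩ ⟨C', hC', h'⟩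
    refine ⟨C + C' * (1 + ‖v‖), by positivity, fun x r => ?_⟩
    dsimp only [Prod.mk_add_mk] at h h' ⊢
    have e : (∫ t, (f (x + S t + r • (v + v')) - f (x + S t)) ∂μ) - r • (w + w') =
        ((∫ t, (f (x + S t + r • v) - f (x + S t)) ∂μ) - r • w) +
        ((∫ t, (f ((x + r • v) + S t + r • v') - f ((x + r • v) + S t)) ∂μ) - r • w') := by
      rw [← add_sub_add_comm, ← smul_add, ← integral_add (integrable_of_compact (by fun_prop))
        (integrable_of_compact (by fun_prop))]
      congr 2
      ext t
      have e1 : x + S t + r • (v + v') = x + r • v + S t + r • v' := by rw [smul_add]; abel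
      have e2 : x + S t + r • v = x + r • v + S t := by abel
      rw [e1, e2]; abel
    have n1 : ‖x + r • v‖ ≤ ‖x‖ + |r| * ‖v‖ := by
      simpa [norm_smul] using norm_add_le x (r • v)
    rw [e]
    calc _ ≤ C * |r| * (|r| + ‖x‖) + C' * |r| * (|r| + ‖x + r • v‖) :=
          (norm_add_le _ _).trans (add_le_add (h x r) (h' _ r))
      _ ≤ C * |r| * (|r| + ‖x‖) + C' * |r| * (|r| + (‖x‖ + |r| * ‖v‖)) := by gcongr
      _ ≤ C * |r| * (|r| + ‖x‖) + C' * |r| * ((|r| + ‖x‖) * (1 + ‖v‖)) := by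
          gcongr
          nlinarith [mul_nonneg (norm_nonneg x) (norm_nonneg v)]
      _ = _ := by ring
  smul_mem' := by
    rintro a ⟨v, w⟩ ⟨C, hC, h⟩
    refine ⟨C * |a| * (1 + |a|), by positivity, fun x r => ?_⟩
    have := h x (r * a)
    dsimp only [Prod.smul_mk] at this ⊢
    rw [mul_smul, mul_smul, abs_mul] at this
    refine this.trans ?_
    calc C * (|r| * |a|) * (|r| * |a| + ‖x‖)
        ≤ C * (|r| * |a|) * ((|r| + ‖x‖) * (1 + |a|)) := by
          gcongr
          nlinarith [mul_nonneg (norm_nonneg x) (abs_nonneg a), abs_nonneg r]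
      _ = _ := by ring

variable {W₁ W₂ : Type*} [NormedAddCommGroup W₁] [NormedSpace ℝ W₁]
  [NormedAddCommGroup W₂] [NormedSpace ℝ W₂] {ι : Type*} [Fintype ι]

/-- Averaging over the compact random shift `S` does not shorten the increments of an isometry of
matrices. The inequality `≥` uses a single functional that is nearly norming for all the shifts at
once, provided by `exists_functional` on the span of `x` and of a finite net of the range of `S`. -/
lemma norm_integral_difference (A : (ι → X) →L[ℝ] W₁) (B : (ι → Y) →L[ℝ] W₂) [CompleteSpace Y]
    [CompleteSpace W₂]
    {f : X → Y} (hfc : Continuous f)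
    (hf : ∀ a b : ι → X, ‖B (fun i => f (a i) - f (b i))‖ = ‖A (a - b)‖)
    {S : Ω → X} (hS : Continuous S) (μ : Measure Ω) [IsProbabilityMeasure μ] (x : ι → X) :
    ‖B (∫ t, (fun i => f (S t + x i) - f (S t)) ∂μ)‖ = ‖A x‖ := by
  have hint : Integrable (fun t => (fun i => f (S t + x i) - f (S t))) μ :=
    integrable_of_compact (by fun_prop)
  have hx : ∀ t, ‖B (fun i => f (S t + x i) - f (S t))‖ = ‖A x‖ := fun t => by
    have := hf (fun i => S t + x i) (fun _ => S t)
    rw [this]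
    congr 2
    ext i; simp
  have hconst : ∀ y : X, ‖A (fun _ => y)‖ ≤ ‖A‖ * ‖y‖ := fun y =>
    (A.le_opNorm _).trans (by gcongr; exact pi_norm_const_le y)
  apply le_antisymm
  · rw [← B.integral_comp_comm hint]
    refine (norm_integral_le_of_norm_le_const (C := ‖A x‖) (ae_of_all _ fun t => (hx t).le)).trans
      (by simp)
  · refine le_of_forall_pos_le_add fun ε hε => ?_
    set δ : ℝ := ε / (4 * (‖A‖ + 1)) with hδ
    have hδ0 : 0 < δ := by positivity
    have hδA : ‖A‖ * δ ≤ ε / 4 := by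
      rw [show ‖A‖ * δ = ε / 4 * (‖A‖ / (‖A‖ + 1)) by rw [hδ]; field_simp]
      refine mul_le_of_le_one_right (by positivity) ?_
      rw [div_le_one (by positivity)]; linarith
    -- a finite net of the compact range of `S` spans the finite-dimensional space to be used
    obtain ⟨T, -, hTf, hT⟩ := (isCompact_range hS).finite_cover_balls hδ0
    set V : Submodule ℝ (ι → X) :=
      Submodule.span ℝ (insert x ((fun (y : X) (_ : ι) => y) '' T))
    have : FiniteDimensional ℝ V :=
      FiniteDimensional.span_of_finite ℝ ((hTf.image _).insert x)
    obtain ⟨φ, hφ, hφV⟩ := exists_functional (A : (ι → X) →ₗ[ℝ] W₁)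
      (fun a => B (fun i => f (a i)))
      (fun a b => by rw [← map_sub]; exact hf a b) V
      (Submodule.subset_span (Set.mem_insert x _)) (∑ y ∈ hTf.toFinset, ‖A (fun _ => y)‖)
      (η := ε / 2) (by positivity)
    have hle : ∀ w, |φ w| ≤ ‖w‖ := fun w => by simpa using φ.le_of_opNorm_le hφ w
    have key : ∀ t, ‖A x‖ - ε ≤ φ (B (fun i => f (S t + x i) - f (S t))) := fun t => by
      obtain ⟨y, hyT, hy⟩ := Set.mem_iUnion₂.1 (hT ⟨t, rfl⟩)
      rw [Metric.mem_ball, dist_eq_norm] at hy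
      have h1 := hφV (fun _ => y)
        (Submodule.subset_span (Set.mem_insert_of_mem _ ⟨y, hyT, rfl⟩))
        (Finset.single_le_sum (f := fun y => ‖A (fun _ : ι => y)‖) (fun _ _ => norm_nonneg _)
          (hTf.mem_toFinset.2 hyT))
      have hA : ‖A (fun _ => S t - y)‖ ≤ ε / 4 :=
        (hconst _).trans (le_trans (by gcongr) hδA)
      have h2 := hle (B (fun i => f (S t + x i) - f (y + x i)))
      have h3 := hle (B (fun i => f (S t) - f y))
      have h4 := hf (fun i => S t + x i) (fun i => y + x i)
      have h5 := hf (fun i => S t) (fun i => y)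
      rw [show ((fun i => S t + x i) - (fun i => y + x i) : ι → X) = fun _ => S t - y by
        ext i; simp] at h4
      rw [show ((fun i => S t) - (fun i => y) : ι → X) = fun _ => S t - y by
        ext i; simp] at h5
      have e : B (fun i => f (S t + x i) - f (S t)) =
          (B (fun i => f (((fun _ => y) + x : ι → X) i)) - B (fun _ => f y)) +
          B (fun i => f (S t + x i) - f (y + x i)) - B (fun i => f (S t) - f y) := by
        rw [← map_sub, ← map_add, ← map_sub]
        congr 1
        ext i
        simp
      rw [e, map_sub φ, map_add φ]
      simp only [ContinuousLinearMap.coe_coe] at h1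
      have h6 := (abs_le.1 h2).1
      have h7 := (abs_le.1 h3).2
      linarith
    have h8 : ‖A x‖ - ε ≤ φ (B (∫ t, (fun i => f (S t + x i) - f (S t)) ∂μ)) := by
      have := (φ.comp B).integral_comp_comm hint
      simp only [ContinuousLinearMap.comp_apply] at this
      rw [← this]
      calc ‖A x‖ - ε = ∫ _t : Ω, (‖A x‖ - ε) ∂μ := by simp
        _ ≤ _ := integral_mono (integrable_const _)
            ((φ.comp B).integrable_comp hint) key
    linarith [(le_abs_self _).trans (hle (B (∫ t, (fun i => f (S t + x i) - f (S t)) ∂μ)))]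

/-- Directional derivatives of the average inherit the isometry property: compare
`r • b` with the averaged increment along `r • a` and let `r → 0`. -/
lemma norm_eq_of_avgDeriv (A : (ι → X) →L[ℝ] W₁) (B : (ι → Y) →L[ℝ] W₂) [CompleteSpace Y]
    [CompleteSpace W₂]
    {f : X → Y} (hfc : Continuous f)
    (hf : ∀ a b : ι → X, ‖B (fun i => f (a i) - f (b i))‖ = ‖A (a - b)‖)
    {S : Ω → X} (hS : Continuous S) (μ : Measure Ω) [IsProbabilityMeasure μ]
    {a : ι → X} {b : ι → Y} (hab : ∀ i, AvgDeriv f S μ (a i) (b i)) :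
    ‖B b‖ = ‖A a‖ := by
  choose C hC hab using hab
  have hb : ∀ r : ℝ, 0 < r → |‖B b‖ - ‖A a‖| ≤ ‖B‖ * (∑ i, C i) * r := fun r hr => by
    set I : ι → Y := ∫ t, (fun i => f (S t + (r • a) i) - f (S t)) ∂μ with hI
    have h1 : ‖B I‖ = r * ‖A a‖ := by
      rw [hI, norm_integral_difference A B hfc hf hS μ (r • a), map_smul, norm_smul,
        Real.norm_of_nonneg hr.le]
    have hCs : 0 ≤ ∑ i, C i := Finset.sum_nonneg fun i _ => hC i
    have h2 : ‖r • b - I‖ ≤ (∑ i, C i) * (r * r) := by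
      refine (pi_norm_le_iff_of_nonneg (by positivity)).2 fun i => ?_
      have hint : Integrable (fun t => (fun i => f (S t + (r • a) i) - f (S t))) μ :=
        integrable_of_compact (by fun_prop)
      have h3 : I i = ∫ t, (f (S t + r • a i) - f (S t)) ∂μ :=
        ((ContinuousLinearMap.proj (R := ℝ) (φ := fun _ : ι => Y) i).integral_comp_comm hint).symm
      have h4 := hab i 0 r
      simp only [zero_add, norm_zero, add_zero, abs_of_pos hr] at h4
      rw [Pi.sub_apply, Pi.smul_apply, norm_sub_rev, h3]
      refine h4.trans ?_
      rw [mul_assoc]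
      gcongr
      exact Finset.single_le_sum (f := C) (fun i _ => hC i) (Finset.mem_univ i)
    have h5 : |‖B (r • b)‖ - ‖B I‖| ≤ ‖B‖ * ((∑ i, C i) * (r * r)) := by
      refine (abs_norm_sub_norm_le _ _).trans ?_
      rw [← map_sub]
      exact (B.le_opNorm _).trans (by gcongr)
    rw [map_smul, norm_smul, Real.norm_of_nonneg hr.le, h1, ← mul_sub, abs_mul, abs_of_pos hr] at h5
    refine le_of_mul_le_mul_left ?_ hr
    linarith
  have h0 : |‖B b‖ - ‖A a‖| ≤ 0 := by
    have ht : Tendsto (fun r : ℝ => ‖B‖ * (∑ i, C i) * r) (𝓝[>] 0) (𝓝 0) := by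
      have : Continuous (fun r : ℝ => ‖B‖ * (∑ i, C i) * r) := by fun_prop
      simpa using (this.tendsto 0).mono_left nhdsWithin_le_nhds
    exact ge_of_tendsto ht (eventually_nhdsWithin_of_forall fun r hr => hb r hr)
  exact sub_eq_zero.1 (abs_eq_zero.1 (le_antisymm h0 (abs_nonneg _)))

end Average

/-! ### Linearization of isometries of matrices -/

/-- The average of `f` over the cube has a derivative in the direction `e` of a coordinate of the
cube: integrating that coordinate first reduces to `norm_integral_shift_sub_le`. -/
lemma avgDeriv_of_update {X Y : Type*} [NormedAddCommGroup X] [NormedSpace ℝ X]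
    [NormedAddCommGroup Y] [NormedSpace ℝ Y] [CompleteSpace Y] {f : X → Y} {K : ℝ} (hK0 : 0 ≤ K)
    (hK : ∀ a b, ‖f a - f b‖ ≤ K * ‖a - b‖) (hfc : Continuous f)
    {S : (ℕ → unitInterval) → X} (hS : Continuous S) {e : X} {k : ℕ}
    (hSe : ∀ t r, S (Function.update t k r) = S t + ((r : ℝ) - t k) • e) :
    ∃ w : Y, AvgDeriv f S (Measure.infinitePi fun _ : ℕ => (volume : Measure unitInterval)) e w := by
  set μ := Measure.infinitePi fun _ : ℕ => (volume : Measure unitInterval)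
  -- `T t` is `S t` with the `k`-th coordinate of `t` reset to zero
  set T : (ℕ → unitInterval) → X := fun t => S t - (t k : ℝ) • e
  have hTc : Continuous T := by fun_prop
  refine ⟨∫ t, (f (T t + e) - f (T t)) ∂μ, 2 * K * (1 + ‖e‖), by positivity, fun x h => ?_⟩
  have hslice : ∫ t, (f (x + S t + h • e) - f (x + S t)) ∂μ =
      ∫ t, (∫ r in (0:ℝ)..1, (f (x + T t + (r + h) • e) - f (x + T t + r • e))) ∂μ := by
    have hc : Continuous fun t => f (x + S t + h • e) - f (x + S t) := by fun_prop
    have hu : Continuous fun p : (ℕ → unitInterval) × unitInterval =>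
        Function.update p.1 k p.2 := continuous_fst.update k continuous_snd
    conv_lhs => rw [show μ = _ from (measurePreserving_update k).map_eq.symm]
    rw [integral_map hu.aemeasurable
      (by rw [(measurePreserving_update k).map_eq]; exact hc.aestronglyMeasurable),
      integral_prod (fun p : (ℕ → unitInterval) × unitInterval =>
        f (x + S (Function.update p.1 k p.2) + h • e) - f (x + S (Function.update p.1 k p.2)))
        (integrable_of_compact (hc.comp hu))]
    congr 1
    ext t
    rw [intervalIntegral.integral_of_le zero_le_one, ← integral_Icc_eq_integral_Ioc]
    have := unitInterval.measurePreserving_coe.integral_comp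
      unitInterval.measurableEmbedding_coe
      (fun r : ℝ => f (x + T t + (r + h) • e) - f (x + T t + r • e))
    rw [← this]
    congr 1
    ext r
    have e1 : x + S (Function.update t k r) = x + T t + (r : ℝ) • e := by
      have hTt : T t = S t - (t k : ℝ) • e := rfl
      rw [hSe, hTt, sub_smul]; abel
    rw [e1, add_smul]
    congr 2
    abel
  have hc1 : Continuous fun t =>
      ∫ r in (0:ℝ)..1, (f (x + T t + (r + h) • e) - f (x + T t + r • e)) :=
    intervalIntegral.continuous_parametric_intervalIntegral_of_continuous' (by fun_prop) 0 1
  have hc2 : Continuous fun t => h • (f (T t + e) - f (T t)) := by fun_prop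
  rw [hslice, ← integral_smul, ← integral_sub (integrable_of_compact hc1)
    (integrable_of_compact hc2)]
  refine (norm_integral_le_of_norm_le_const (C := 2 * K * (1 + ‖e‖) * |h| * (|h| + ‖x‖))
    (ae_of_all _ fun t => ?_)).trans (by simp)
  have hline := norm_integral_shift_sub_le (u := fun r : ℝ => f (x + T t + r • e))
    (L := K * ‖e‖) (fun a b => by
      refine (hK _ _).trans (le_of_eq ?_)
      rw [add_sub_add_left_eq_sub, ← sub_smul, norm_smul, Real.norm_eq_abs]; ring) (by fun_prop) h
  simp only [one_smul, zero_smul, add_zero] at hline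
  have h1 := hK (x + T t + e) (T t + e)
  have h2 := hK (x + T t) (T t)
  rw [show x + T t + e - (T t + e) = x by abel] at h1
  rw [show x + T t - T t = x by abel] at h2
  set Q := ∫ r in (0:ℝ)..1, (f (x + T t + (r + h) • e) - f (x + T t + r • e))
  have e2 : Q - h • (f (T t + e) - f (T t)) = (Q - h • (f (x + T t + e) - f (x + T t))) +
      h • ((f (x + T t + e) - f (T t + e)) - (f (x + T t) - f (T t))) := by
    simp only [smul_sub]; abel
  rw [e2]
  calc _ ≤ 2 * (K * ‖e‖) * |h| * |h| + |h| * (K * ‖x‖ + K * ‖x‖) := by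
        refine (norm_add_le _ _).trans (add_le_add hline ?_)
        rw [norm_smul, Real.norm_eq_abs]
        gcongr
        exact (norm_sub_le _ _).trans (add_le_add h1 h2)
    _ = 2 * K * |h| * (‖e‖ * |h| + ‖x‖) := by ring
    _ ≤ 2 * K * |h| * ((1 + ‖e‖) * (|h| + ‖x‖)) := by
        gcongr
        nlinarith [mul_nonneg (norm_nonneg e) (norm_nonneg x), abs_nonneg h]
    _ = _ := by ring

/-- The general linearization principle: a Lipschitz map `f` of a separable Banach space which is
isometric for the seminorms `‖A ·‖` and `‖B ·‖` on tuples can be replaced by a linear map with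
the same property. -/
theorem exists_linear_of_isometry {X Y W₁ W₂ ι : Type*}
    [NormedAddCommGroup X] [NormedSpace ℝ X] [CompleteSpace X]
    [TopologicalSpace.SeparableSpace X]
    [NormedAddCommGroup Y] [NormedSpace ℝ Y] [CompleteSpace Y]
    [NormedAddCommGroup W₁] [NormedSpace ℝ W₁]
    [NormedAddCommGroup W₂] [NormedSpace ℝ W₂] [CompleteSpace W₂] [Fintype ι]
    (A : (ι → X) →L[ℝ] W₁) (B : (ι → Y) →L[ℝ] W₂) {f : X → Y} {K : ℝ} (hK0 : 0 ≤ K)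
    (hK : ∀ a b, ‖f a - f b‖ ≤ K * ‖a - b‖)
    (hf : ∀ a b : ι → X, ‖B (fun i => f (a i) - f (b i))‖ = ‖A (a - b)‖) :
    ∃ g : X →ₗ[ℝ] Y, ∀ a : ι → X, ‖B (fun i => g (a i))‖ = ‖A a‖ := by
  have hfc : Continuous f :=
    (LipschitzWith.of_dist_le_mul (K := ⟨K, hK0⟩) fun a b => by
      rw [dist_eq_norm, dist_eq_norm]; exact hK a b).continuous
  -- a summable sequence proportional to a dense one, spanning a compact random cube `S`
  set d := TopologicalSpace.denseSeq X
  set c : ℕ → ℝ := fun k => (2 ^ k * (1 + ‖d k‖))⁻¹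
  have hc0 : ∀ k, 0 < c k := fun k => by positivity
  set e : ℕ → X := fun k => c k • d k with he
  have hes : ∀ k, ‖e k‖ ≤ (1 / 2 : ℝ) ^ k := fun k => by
    have hck : c k = (2 ^ k * (1 + ‖d k‖))⁻¹ := rfl
    rw [he, norm_smul, Real.norm_of_nonneg (hc0 k).le, hck, mul_inv, mul_assoc, one_div, inv_pow]
    refine mul_le_of_le_one_right (by positivity) ?_
    rw [inv_mul_le_iff₀ (by positivity)]; linarith
  have hte : ∀ (t : ℕ → unitInterval) k, ‖(t k : ℝ) • e k‖ ≤ (1 / 2 : ℝ) ^ k := fun t k => by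
    rw [norm_smul, Real.norm_of_nonneg (t k).2.1]
    exact (mul_le_of_le_one_left (norm_nonneg _) (t k).2.2).trans (hes k)
  set S : (ℕ → unitInterval) → X := fun t => ∑' k, (t k : ℝ) • e k with hSdef
  have hS : Continuous S :=
    continuous_tsum (fun k => by fun_prop) summable_geometric_two fun k t => hte t k
  have hsum : ∀ t : ℕ → unitInterval, Summable fun k => (t k : ℝ) • e k := fun t =>
    Summable.of_norm_bounded summable_geometric_two (hte t)
  have hSe : ∀ k t r, S (Function.update t k r) = S t + ((r : ℝ) - t k) • e k := fun k t r => by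
    have h1 := (hsum t).hasSum.update k ((r : ℝ) • e k)
    have h2 : Function.update (fun j => (t j : ℝ) • e j) k ((r : ℝ) • e k) =
        fun j => (Function.update t k r j : ℝ) • e j := by
      ext j
      by_cases hj : j = k
      · subst hj; simp
      · simp [hj]
    rw [h2] at h1
    rw [hSdef, sub_smul, add_comm]
    exact h1.tsum_eq
  set Γ := avgGraph f hfc S hS (Measure.infinitePi fun _ : ℕ => (volume : Measure unitInterval))
    with hΓ
  set p₁ : Γ →ₗ[ℝ] X := LinearMap.fst ℝ X Y ∘ₗ Γ.subtype
  set p₂ : Γ →ₗ[ℝ] Y := LinearMap.snd ℝ X Y ∘ₗ Γ.subtype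
  have hdense : DenseRange p₁ := by
    refine (TopologicalSpace.denseRange_denseSeq X).mono ?_
    rintro _ ⟨k, rfl⟩
    obtain ⟨w, hw⟩ := avgDeriv_of_update hK0 hK hfc hS (hSe k)
    refine ⟨(c k)⁻¹ • ⟨(e k, w), hw⟩, ?_⟩
    rw [map_smul]
    exact inv_smul_smul₀ (hc0 k).ne' (d k)
  have hbound : ∃ C, ∀ γ, ‖p₂ γ‖ ≤ C * ‖p₁ γ‖ := ⟨K, fun γ => AvgDeriv.norm_le hK γ.2⟩
  -- extend the linear map with graph `Γ` by density
  refine ⟨(p₂.extendOfNorm p₁ : X →L[ℝ] Y), fun a => ?_⟩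
  refine isClosed_property (e := fun (γ : ι → Γ) i => p₁ (γ i)) (DenseRange.piMap fun _ => hdense)
    (p := fun a => ‖B (fun i => p₂.extendOfNorm p₁ (a i))‖ = ‖A a‖)
    (isClosed_eq (by fun_prop) (by fun_prop)) (fun γ => ?_) a
  simp only [LinearMap.extendOfNorm_eq hdense hbound]
  exact norm_eq_of_avgDeriv A B hfc hf hS _ fun i => (γ i).2

/-! ### Amplifications as linear maps -/

section Amplification

variable {ι : Type*} [Fintype ι] {H : Type*} [NormedAddCommGroup H]
  [InnerProductSpace ℂ H]

lemma amp_apply (x : ι → ι → H →L[ℂ] H) (v : PiLp 2 fun _ : ι => H) (i : ι) :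
    amp x v i = ∑ j, x i j (v j) := by
  simp [amp]

variable [DecidableEq ι]

/-- The inclusion of the `i`-th summand in the `ℓ²`-sum of copies of `H`. -/
def incl (i : ι) : H →L[ℂ] PiLp 2 fun _ : ι => H :=
  (PiLp.continuousLinearEquiv 2 ℂ fun _ : ι => H).symm.toContinuousLinearMap ∘L
    ContinuousLinearMap.single ℂ (fun _ : ι => H) i

lemma incl_apply {ι : Type*} [DecidableEq ι] (i k : ι) (ξ : H) :
    (incl i ξ : PiLp 2 fun _ : ι => H) k = (Pi.single i ξ : ι → H) k := rfl

lemma amp_eq_sum (x : ι → ι → H →L[ℂ] H) :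
    amp x = ∑ i, ∑ j, incl i ∘L x i j ∘L (PiLp.proj 2 (fun _ : ι => H) j : _ →L[ℂ] H) := by
  ext v k
  rw [amp_apply]
  simp [incl_apply, Finset.sum_apply, Pi.single_apply]

lemma proj_comp_amp_comp_incl (x : ι → ι → H →L[ℂ] H) (i j : ι) :
    (PiLp.proj 2 (fun _ : ι => H) i : _ →L[ℂ] H) ∘L amp x ∘L incl j = x i j := by
  ext ξ
  simp [amp_apply, incl_apply, Pi.single_apply, apply_ite]

set_option synthInstance.maxHeartbeats 200000 in
/-- The amplification of matrices with entries in `X`, as a continuous real-linear map. The matrices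
carry the supremum norm of their entries here, and the norm of the image is the matrix norm. -/
def ampCLM (ι : Type*) [Fintype ι] (X : Submodule ℂ (H →L[ℂ] H)) :
    (ι × ι → X) →L[ℝ] ((PiLp 2 fun _ : ι => H) →L[ℂ] PiLp 2 fun _ : ι => H) where
  toFun x := amp fun i j => (x (i, j) : H →L[ℂ] H)
  map_add' x y := by
    ext v k
    simp [amp_apply, Finset.sum_add_distrib]
  map_smul' r x := by
    ext v k
    simp [amp_apply, Finset.smul_sum]
  cont := by
    classical
    simp only [amp_eq_sum]
    refine continuous_finsetSum _ fun i _ => continuous_finsetSum _ fun j _ => ?_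
    have h : Continuous fun x : ι × ι → X => (x (i, j) : H →L[ℂ] H) := by fun_prop
    exact continuous_const.clm_comp (h.clm_comp continuous_const)

end Amplification

/-- If a separable operator space `X` almost completely isometrically embeds
into an operator space `Y`, then `X` almost completely ℝ-linearly isometrically embeds
into `Y`. -/
theorem statement_1
    {H₁ : Type*} [NormedAddCommGroup H₁] [InnerProductSpace ℂ H₁] [CompleteSpace H₁]
    {H₂ : Type*} [NormedAddCommGroup H₂] [InnerProductSpace ℂ H₂] [CompleteSpace H₂]
    (X : Submodule ℂ (H₁ →L[ℂ] H₁)) (Y : Submodule ℂ (H₂ →L[ℂ] H₂))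
    (hX : IsClosed (X : Set (H₁ →L[ℂ] H₁))) (hY : IsClosed (Y : Set (H₂ →L[ℂ] H₂)))
    [TopologicalSpace.SeparableSpace X]
    (f : ℕ → (X → Y))
    (hf : ∀ n : ℕ, ∀ x y : Fin n → Fin n → X,
      matNorm (fun i j => (f n (x i j) : H₂ →L[ℂ] H₂) - (f n (y i j) : H₂ →L[ℂ] H₂)) =
        matNorm fun i j => (x i j : H₁ →L[ℂ] H₁) - (y i j : H₁ →L[ℂ] H₁)) :
    ∃ g : ℕ → (X →ₗ[ℝ] Y), ∀ n : ℕ, ∀ x y : Fin n → Fin n → X,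
      matNorm (fun i j => (g n (x i j) : H₂ →L[ℂ] H₂) - (g n (y i j) : H₂ →L[ℂ] H₂)) =
        matNorm fun i j => (x i j : H₁ →L[ℂ] H₁) - (y i j : H₁ →L[ℂ] H₁) := by
  have : CompleteSpace X := hX.completeSpace_coe
  have : CompleteSpace Y := hY.completeSpace_coe
  suffices hn : ∀ n : ℕ, ∃ g : X →ₗ[ℝ] Y, ∀ x y : Fin n → Fin n → X,
      matNorm (fun i j => (g (x i j) : H₂ →L[ℂ] H₂) - (g (y i j) : H₂ →L[ℂ] H₂)) =
        matNorm fun i j => (x i j : H₁ →L[ℂ] H₁) - (y i j : H₁ →L[ℂ] H₁) by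
    choose g hg using hn
    exact ⟨g, hg⟩
  intro n
  rcases Nat.eq_zero_or_pos n with rfl | hn
  -- the `0 × 0` matrices form a one-point space
  · refine ⟨0, fun x y => ?_⟩
    have h1 : ∀ z : Fin 0 → Fin 0 → H₁ →L[ℂ] H₁, matNorm z = 0 := fun z => by
      rw [matNorm, norm_eq_zero]; ext v i; exact i.elim0
    have h2 : ∀ z : Fin 0 → Fin 0 → H₂ →L[ℂ] H₂, matNorm z = 0 := fun z => by
      rw [matNorm, norm_eq_zero]; ext v i; exact i.elim0
    rw [h1, h2]
  set A := ampCLM (Fin n) X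
  set B := ampCLM (Fin n) Y
  have hAB : ∀ a b : Fin n × Fin n → X, ‖B (fun i => f n (a i) - f n (b i))‖ = ‖A (a - b)‖ :=
    fun a b => hf n (fun i j => a (i, j)) (fun i j => b (i, j))
  let i₀ : Fin n := ⟨0, hn⟩
  -- every entry of a matrix is dominated by the norm of the matrix
  have hK : ∃ K : ℝ, 0 ≤ K ∧ ∀ a b : X, ‖f n a - f n b‖ ≤ K * ‖a - b‖ := by
    set P : (PiLp 2 fun _ : Fin n => H₂) →L[ℂ] H₂ := PiLp.proj 2 (fun _ : Fin n => H₂) i₀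
    set I : H₂ →L[ℂ] PiLp 2 fun _ : Fin n => H₂ := incl i₀
    refine ⟨‖P‖ * (‖A‖ * ‖I‖), by positivity, fun a b => ?_⟩
    have h1 : ((f n a - f n b : Y) : H₂ →L[ℂ] H₂) = P ∘L B (fun _ => f n a - f n b) ∘L I :=
      (proj_comp_amp_comp_incl (fun _ _ : Fin n => ((f n a - f n b : Y) : H₂ →L[ℂ] H₂)) i₀ i₀).symm
    have h2 : ‖A ((fun _ => a) - fun _ => b)‖ ≤ ‖A‖ * ‖a - b‖ :=
      (A.le_opNorm _).trans (by gcongr; exact pi_norm_const_le (a - b))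
    calc ‖f n a - f n b‖ = ‖P ∘L B (fun _ => f n a - f n b) ∘L I‖ := by
          rw [← h1]; rfl
      _ ≤ ‖P‖ * (‖B (fun _ => f n a - f n b)‖ * ‖I‖) :=
          (ContinuousLinearMap.opNorm_comp_le _ _).trans
            (by gcongr; exact ContinuousLinearMap.opNorm_comp_le _ _)
      _ = ‖P‖ * (‖A ((fun _ => a) - fun _ => b)‖ * ‖I‖) := by rw [hAB (fun _ => a) (fun _ => b)]
      _ ≤ ‖P‖ * (‖A‖ * ‖a - b‖ * ‖I‖) := by gcongr
      _ = _ := by ring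
  obtain ⟨K, hK0, hK⟩ := hK
  obtain ⟨g, hg⟩ := exists_linear_of_isometry A B hK0 hK hAB
  refine ⟨g, fun x y => ?_⟩
  have h := hg fun p => x p.1 p.2 - y p.1 p.2
  simp only [map_sub] at h
  exact h

end OSpaper
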